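/- Let G be a connected bridgeless multigraph and let e1, e2 be two distinct edges of G. Then the graph G − {e1, e2} obtained by removing e1 and e2 is disconnected if and only if every cycle of G containing e1 contains e2 and every cycle containing e2 contains e1 (i.e., (e1,e2) is a separating pair exactly when e1 ∼ e2). -/

import Mathlib

/-- A finite multigraph: finite vertex and edge types, each edge carrying a source and a
target vertex (this is an auxiliary orientation); loops and parallel edges are allowed. -/
structure Multigraph where
  V : Type
  E : Type
  [fV : Fintype V]
  [fE : Fintype E]
  [dV : DecidableEq V]
  [dE : DecidableEq E]
  s : E → V
  t : E → V

attribute [instance] Multigraph.fV Multigraph.fE Multigraph.dV Multigraph.dE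

namespace Multigraph

variable (G : Multigraph)

/-- Two vertices are adjacent if some edge joins them. -/
def Adj (a b : G.V) : Prop :=
  ∃ e : G.E, (G.s e = a ∧ G.t e = b) ∨ (G.s e = b ∧ G.t e = a)

/-- A multigraph is connected if it is nonempty and any two vertices are joined by a walk. -/
def Connected : Prop :=
  Nonempty G.V ∧ ∀ a b : G.V, Relation.ReflTransGen G.Adj a b

/-- The graph obtained by deleting the edges in `F` is connected. -/
def ConnectedAvoiding (F : Set G.E) : Prop :=
  ∀ a b : G.V, Relation.ReflTransGen
    (fun x y => ∃ e : G.E, e ∉ F ∧ ((G.s e = x ∧ G.t e = y) ∨ (G.s e = y ∧ G.t e = x))) a b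

/-- The valency of a vertex: the number of half-edges at it (a loop counts twice). -/
def val (v : G.V) : ℕ :=
  (Finset.univ.filter (fun e => G.s e = v)).card + (Finset.univ.filter (fun e => G.t e = v)).card

/-- The number of loops based at a vertex. -/
def loops (v : G.V) : ℕ :=
  (Finset.univ.filter (fun e => G.s e = v ∧ G.t e = v)).card

/-- The number of edges joining two vertices. -/
def edgesBetween (v w : G.V) : ℕ :=
  (Finset.univ.filter (fun e => (G.s e = v ∧ G.t e = w) ∨ (G.s e = w ∧ G.t e = v))).card

/-- The first Betti number `b₁(G) = |E| - |V| + 1` (of a connected graph). -/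
def b1 : ℤ := (Fintype.card G.E : ℤ) - (Fintype.card G.V : ℤ) + 1

/-- The boundary map `∂ : C₁(G,ℤ) → C₀(G,ℤ)`, sending an edge `e` to `t e - s e`. -/
def boundaryHom : (G.E → ℤ) →+ (G.V → ℤ) where
  toFun c := fun v =>
    ∑ e : G.E, c e * ((if G.t e = v then 1 else 0) - (if G.s e = v then 1 else 0))
  map_zero' := by funext v; simp
  map_add' a b := by
    funext v
    simp [Pi.add_apply, add_mul, Finset.sum_add_distrib]

/-- The coboundary map `δ : C₀(G,ℤ) → C₁(G,ℤ)`. -/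
def coboundaryHom : (G.V → ℤ) →+ (G.E → ℤ) where
  toFun f := fun e => f (G.t e) - f (G.s e)
  map_zero' := by funext e; simp
  map_add' a b := by funext e; simp only [Pi.add_apply]; ring

/-- The cycle space `H₁(G,ℤ)`, i.e. the kernel of the boundary map. -/
def cycleSpace : AddSubgroup (G.E → ℤ) := (G.boundaryHom).ker

/-- `C` is the edge set of a closed walk with no repeated vertices except the
initial/terminal one (so a loop is a cycle). -/
def IsCycle (C : Finset G.E) : Prop :=
  ∃ n : ℕ, 0 < n ∧ ∃ (e : Fin n → G.E) (v : Fin (n + 1) → G.V),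
    Function.Injective e ∧
    (∀ i : Fin n, (G.s (e i) = v i.castSucc ∧ G.t (e i) = v i.succ) ∨
        (G.s (e i) = v i.succ ∧ G.t (e i) = v i.castSucc)) ∧
    v 0 = v (Fin.last n) ∧
    (∀ i j : Fin (n + 1), v i = v j →
        i = j ∨ (i = 0 ∧ j = Fin.last n) ∨ (i = Fin.last n ∧ j = 0)) ∧
    C = Finset.image e Finset.univ

/-- A bridge (separating edge) is an edge contained in no cycle. -/
def IsBridge (e : G.E) : Prop := ∀ C : Finset G.E, G.IsCycle C → e ∉ C

def Bridgeless : Prop := ∀ e : G.E, ¬ G.IsBridge e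

/-- `e₁ ∼ e₂` iff every cycle containing `e₁` contains `e₂` and conversely. -/
def Sim (e₁ e₂ : G.E) : Prop :=
  ∀ C : Finset G.E, G.IsCycle C → (e₁ ∈ C ↔ e₂ ∈ C)

/-- The C1-sets: the equivalence classes of the relation `Sim`. -/
def IsC1Set (S : Set G.E) : Prop := ∃ e : G.E, S = {e' | G.Sim e e'}

/-- The multigraph obtained by contracting every edge in `F` (a contracted loop is
simply deleted). -/
noncomputable def contractSet (F : Set G.E) : Multigraph :=
  letI : DecidableEq (Quot (fun a b : G.V => ∃ e ∈ F, G.s e = a ∧ G.t e = b)) :=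
    Classical.decEq _
  { V := Quot (fun a b : G.V => ∃ e ∈ F, G.s e = a ∧ G.t e = b)
    E := {e : G.E // e ∉ F}
    fV := Fintype.ofSurjective (Quot.mk _) (fun q => Quot.exists_rep q)
    fE := Fintype.ofInjective (Subtype.val) Subtype.val_injective
    dV := inferInstance
    dE := inferInstance
    s := fun e => Quot.mk _ (G.s e.1)
    t := fun e => Quot.mk _ (G.t e.1) }

/-- `G^(2)`: the multigraph obtained from `G` by contracting every bridge. -/
noncomputable def contractBridges : Multigraph := G.contractSet {e | G.IsBridge e}

/-- An isomorphism of multigraphs. -/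
structure Iso (G₁ G₂ : Multigraph) where
  vEquiv : G₁.V ≃ G₂.V
  eEquiv : G₁.E ≃ G₂.E
  endpoints : ∀ e : G₁.E,
    (G₂.s (eEquiv e) = vEquiv (G₁.s e) ∧ G₂.t (eEquiv e) = vEquiv (G₁.t e)) ∨
    (G₂.s (eEquiv e) = vEquiv (G₁.t e) ∧ G₂.t (eEquiv e) = vEquiv (G₁.s e))

/-- The group of degree-zero divisors `Div⁰(G)`. -/
def Div0 : AddSubgroup (G.V → ℤ) where
  carrier := {D : G.V → ℤ | ∑ v : G.V, D v = 0}
  zero_mem' := by simp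
  add_mem' := by
    intro a b ha hb
    simp only [Set.mem_setOf_eq, Pi.add_apply] at *
    simp [Finset.sum_add_distrib, ha, hb]
  neg_mem' := by
    intro a ha
    simp only [Set.mem_setOf_eq, Pi.neg_apply] at *
    simp [ha]

/-- The principal divisor `div(f_v)` associated to a vertex `v`. -/
def prinDiv (v : G.V) : G.V → ℤ :=
  fun u => if u = v then 2 * (G.loops v : ℤ) - (G.val v : ℤ) else (G.edgesBetween v u : ℤ)

/-- The group of principal divisors `Prin(G)`. -/
def Prin : AddSubgroup (G.V → ℤ) := AddSubgroup.closure (Set.range G.prinDiv)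

end Multigraph

/-- `Jac(G₁) ≅ Jac(G₂)`: a ℤ-linear isomorphism of the cycle lattices preserving the
bilinear forms for which the edges are orthonormal. -/
def JacIsoGraph (G₁ G₂ : Multigraph) : Prop :=
  ∃ φ : G₁.cycleSpace ≃+ G₂.cycleSpace,
    ∀ x y : G₁.cycleSpace,
      (∑ e : G₂.E, ((φ x : G₂.E → ℤ) e) * ((φ y : G₂.E → ℤ) e)) =
      ∑ e : G₁.E, ((x : G₁.E → ℤ) e) * ((y : G₁.E → ℤ) e)

/-- Cyclic equivalence of two multigraphs: a bijection of the edge sets, together with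
signs, inducing an isomorphism of the cycle spaces. -/
def CyclicallyEquivalent (G₁ G₂ : Multigraph) : Prop :=
  ∃ (σ : G₁.E ≃ G₂.E) (ε : G₁.E → ℤ),
    (∀ e, ε e = 1 ∨ ε e = -1) ∧
    ((fun x : G₁.E → ℤ => fun e₂ : G₂.E => ε (σ.symm e₂) * x (σ.symm e₂)) ''
        (G₁.cycleSpace : Set (G₁.E → ℤ))) = (G₂.cycleSpace : Set (G₂.E → ℤ))

/-- Cyclic equivalence of metric graphs: as for graphs, with a length-preserving bijection
of the edge sets. -/
def MetricCycEquiv (G₁ : Multigraph) (ℓ₁ : G₁.E → ℝ) (G₂ : Multigraph) (ℓ₂ : G₂.E → ℝ) : Prop :=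
  ∃ (σ : G₁.E ≃ G₂.E) (ε : G₁.E → ℤ),
    (∀ e, ℓ₂ (σ e) = ℓ₁ e) ∧
    (∀ e, ε e = 1 ∨ ε e = -1) ∧
    ((fun x : G₁.E → ℤ => fun e₂ : G₂.E => ε (σ.symm e₂) * x (σ.symm e₂)) ''
        (G₁.cycleSpace : Set (G₁.E → ℤ))) = (G₂.cycleSpace : Set (G₂.E → ℤ))

/-- `c` chooses one representative edge in each C1-set (i.e. in each `Sim`-class). -/
def IsC1Choice (H : Multigraph) (c : H.E → H.E) : Prop :=
  (∀ e, H.Sim e (c e)) ∧ ∀ e e' : H.E, H.Sim e e' → c e = c e'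

/-- The graph `G^(3)` obtained by contracting, in each C1-set, all edges except the
chosen one. -/
noncomputable def threeGraph (H : Multigraph) (c : H.E → H.E) : Multigraph :=
  H.contractSet {e | c e ≠ e}

/-- The length function on `G^(3)`: a surviving edge gets the total length of its C1-set. -/
noncomputable def threeLength (H : Multigraph) (ℓ : H.E → ℝ) (c : H.E → H.E) :
    (threeGraph H c).E → ℝ :=
  fun e => ∑ e' ∈ Finset.univ.filter (fun e' => c e' = e.1), ℓ e'

/-- A weighted graph: a multigraph with a weight function on the vertices. -/
structure WeightedGraph where
  G : Multigraph
  w : G.V → ℕ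

namespace WeightedGraph

/-- The genus `g(G,w) = b₁(G) + Σ_v w(v)`. -/
def genus (X : WeightedGraph) : ℤ := X.G.b1 + ∑ v : X.G.V, (X.w v : ℤ)

/-- A weighted graph is stable if it is connected, has genus at least 2, and every
vertex of weight zero has valency at least 3. -/
def Stable (X : WeightedGraph) : Prop :=
  X.G.Connected ∧ 2 ≤ X.genus ∧ ∀ v : X.G.V, X.w v = 0 → 3 ≤ X.G.val v

/-- An isomorphism of weighted graphs. -/
structure Iso (X Y : WeightedGraph) where
  vEquiv : X.G.V ≃ Y.G.V
  eEquiv : X.G.E ≃ Y.G.E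
  endpoints : ∀ e : X.G.E,
    (Y.G.s (eEquiv e) = vEquiv (X.G.s e) ∧ Y.G.t (eEquiv e) = vEquiv (X.G.t e)) ∨
    (Y.G.s (eEquiv e) = vEquiv (X.G.t e) ∧ Y.G.t (eEquiv e) = vEquiv (X.G.s e))
  weight_eq : ∀ v : X.G.V, Y.w (vEquiv v) = X.w v

/-- Contraction of a single edge of a weighted graph: a non-loop edge is contracted by
identifying its two endpoints, the new vertex receiving the sum of the two weights;
a loop is deleted, the weight of its base vertex increasing by 1. -/
noncomputable def contract (X : WeightedGraph) (e₀ : X.G.E) : WeightedGraph :=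
  letI : DecidableEq (Quot (fun a b : X.G.V => a = X.G.s e₀ ∧ b = X.G.t e₀)) :=
    Classical.decEq _
  { G := { V := Quot (fun a b : X.G.V => a = X.G.s e₀ ∧ b = X.G.t e₀)
           E := {e : X.G.E // e ≠ e₀}
           fV := Fintype.ofSurjective (Quot.mk _) (fun q => Quot.exists_rep q)
           fE := inferInstance
           dV := inferInstance
           dE := inferInstance
           s := fun e => Quot.mk _ (X.G.s e.1)
           t := fun e => Quot.mk _ (X.G.t e.1) }
    w := fun q =>
      (∑ v ∈ Finset.univ.filter
          (fun v => Quot.mk (fun a b : X.G.V => a = X.G.s e₀ ∧ b = X.G.t e₀) v = q), X.w v) +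
      (if X.G.s e₀ = X.G.t e₀ ∧
          Quot.mk (fun a b : X.G.V => a = X.G.s e₀ ∧ b = X.G.t e₀) (X.G.s e₀) = q
       then 1 else 0) }

/-- One step: `Y` is (isomorphic to) the contraction of a single edge of `X`. -/
def ContractStep (X Y : WeightedGraph) : Prop :=
  ∃ e : X.G.E, Nonempty ((X.contract e).Iso Y)

/-- `X.ContractsTo Y`: `Y` is obtained from `X` by contracting finitely many edges. -/
def ContractsTo : WeightedGraph → WeightedGraph → Prop :=
  Relation.ReflTransGen ContractStep

/-- A sequence of exactly `n` loop contractions from `X` ending at (a graph isomorphic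
to) `Y`. -/
def LoopContractSeq : ℕ → WeightedGraph → WeightedGraph → Prop
  | 0, X, Y => Nonempty (X.Iso Y)
  | n + 1, X, Y => ∃ e : X.G.E, X.G.s e = X.G.t e ∧ LoopContractSeq n (X.contract e) Y

/-- The weightless graph `G''` obtained by replacing each vertex `v` of positive weight
with a weight-zero vertex carrying `w v` new loops. -/
def blowUp (X : WeightedGraph) : WeightedGraph where
  G := { V := X.G.V
         E := X.G.E ⊕ (Σ v : X.G.V, Fin (X.w v))
         fV := inferInstance
         fE := inferInstance
         dV := inferInstance
         dE := inferInstance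
         s := Sum.elim X.G.s (fun p => p.1)
         t := Sum.elim X.G.t (fun p => p.1) }
  w := fun _ => 0

def totalWeight (X : WeightedGraph) : ℕ := ∑ v : X.G.V, X.w v

/-- The lattice `Λ = H₁(G,ℤ) ⊕ ℤ^(g - b₁(G))` underlying the Jacobian torus of a
weighted graph. -/
abbrev JacLattice (X : WeightedGraph) : Type :=
  ↥X.G.cycleSpace × (Fin X.totalWeight → ℤ)

/-- The bilinear form on the Jacobian lattice: on `H₁(G,ℤ)` the edges are orthonormal,
and the form vanishes on the extra summand. -/
def jacForm (X : WeightedGraph) (p q : X.JacLattice) : ℤ :=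
  ∑ e : X.G.E, (p.1 : X.G.E → ℤ) e * (q.1 : X.G.E → ℤ) e

end WeightedGraph

/-- A pure tropical curve: a multigraph with positive edge lengths. -/
structure PureTropicalCurve where
  G : Multigraph
  ℓ : G.E → ℝ
  pos : ∀ e, 0 < ℓ e

/-- A (weighted) tropical curve: a multigraph with vertex weights and positive edge
lengths. -/
structure TropicalCurve where
  G : Multigraph
  w : G.V → ℕ
  ℓ : G.E → ℝ
  pos : ∀ e, 0 < ℓ e

namespace TropicalCurve

def totalWeight (Γ : TropicalCurve) : ℕ := ∑ v : Γ.G.V, Γ.w v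

/-- The lattice `Λ = H₁(G,ℤ) ⊕ ℤ^(g - b₁(G))` underlying `Jac(Γ)`. -/
abbrev JacLattice (Γ : TropicalCurve) : Type :=
  ↥Γ.G.cycleSpace × (Fin Γ.totalWeight → ℤ)

/-- The bilinear form `( , )_ℓ` on the Jacobian lattice, vanishing on the extra
summand. -/
noncomputable def jacForm (Γ : TropicalCurve) (p q : Γ.JacLattice) : ℝ :=
  ∑ e : Γ.G.E, Γ.ℓ e * ((p.1 : Γ.G.E → ℤ) e : ℝ) * ((q.1 : Γ.G.E → ℤ) e : ℝ)

end TropicalCurve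

/-- `Jac(Γ₁) ≅ Jac(Γ₂)`: a ℤ-linear isomorphism of the lattices preserving the bilinear
forms. -/
def TropJacIso (Γ₁ Γ₂ : TropicalCurve) : Prop :=
  ∃ φ : Γ₁.JacLattice ≃+ Γ₂.JacLattice,
    ∀ p q : Γ₁.JacLattice, Γ₂.jacForm (φ p) (φ q) = Γ₁.jacForm p q

/-!
In a connected graph, `G - F` is connected iff the ends of every edge `e ∈ F` are joined by a walk
outside `F`, since such walks can replace the deleted edges; and the ends of `e` are so joined iff
some cycle meets `F` in `e` alone. For `F = {e₁, e₂}`: `G - F` is connected iff there are both a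
cycle through `e₁` avoiding `e₂` and a cycle through `e₂` avoiding `e₁`, whereas `e₁ ∼ e₂` fails iff
there is at least one of the two. When neither edge is a bridge, either cycle yields the other:
if a cycle avoiding `e₂` joins the ends of `e₁`, then a walk between the ends of `e₂` that uses `e₁`
can be rerouted along it, so the ends of `e₂` are joined outside `{e₁, e₂}`.
-/

section Relation

variable {α : Type*} {r : α → α → Prop}

lemma reflTransGen_of_castSucc_succ {n : ℕ} {v : Fin (n + 1) → α} {i j : Fin (n + 1)}
    (hij : i ≤ j) (h : ∀ k : Fin n, i ≤ k.castSucc → k.succ ≤ j → r (v k.castSucc) (v k.succ)) :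
    Relation.ReflTransGen r (v i) (v j) := by
  induction j using Fin.induction with
  | zero => rw [Fin.le_zero_iff.mp hij]
  | succ j ih =>
    obtain hlt | rfl := hij.lt_or_eq
    · have hij' : i ≤ j.castSucc := Fin.le_castSucc_iff.mpr hlt
      exact (ih hij' fun k hik hkj => h k hik (hkj.trans j.castSucc_le_succ)).tail
        (h j hij' le_rfl)
    · rfl

lemma exists_injective_chain_of_reflTransGen {a b : α} (h : Relation.ReflTransGen r a b) :
    ∃ (n : ℕ) (v : Fin (n + 1) → α), Function.Injective v ∧ v 0 = a ∧ v (Fin.last n) = b ∧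
      ∀ i : Fin n, r (v i.castSucc) (v i.succ) := by
  induction h using Relation.ReflTransGen.head_induction_on with
  | refl => exact ⟨0, fun _ => b, Function.injective_of_subsingleton (α := Fin 1) _, rfl, rfl,
      fun i => i.elim0⟩
  | @head a c hac _ ih =>
    obtain ⟨n, v, hv, rfl, hlast, hstep⟩ := ih
    by_cases ha : a ∈ Set.range v
    · obtain ⟨⟨k, hk⟩, rfl⟩ := ha
      obtain ⟨m, rfl⟩ := Nat.exists_eq_add_of_le (Nat.le_of_lt_succ hk)
      exact ⟨m, v ∘ Fin.natAdd k, hv.comp (Fin.natAdd_injective (m + 1) k), rfl, hlast,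
        fun i => hstep (Fin.natAdd k i)⟩
    · refine ⟨n + 1, Fin.cons a v, Fin.cons_injective_iff.mpr ⟨ha, hv⟩, rfl, hlast, ?_⟩
      exact Fin.cases hac hstep

end Relation

namespace Multigraph

variable {G : Multigraph} {F F' : Set G.E} {e e₁ e₂ : G.E} {x y : G.V}

variable (G) in
/-- `e` is an edge with ends `x` and `y`, in either orientation. -/
def Joins (e : G.E) (x y : G.V) : Prop :=
  (G.s e = x ∧ G.t e = y) ∨ (G.s e = y ∧ G.t e = x)

variable (G) in
/-- Adjacency in `G - F`: some edge outside `F` joins the two vertices. -/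
def AdjAvoiding (F : Set G.E) (x y : G.V) : Prop :=
  ∃ e : G.E, e ∉ F ∧ G.Joins e x y

variable (G) in
/-- Reachability in `G - F`, so that `G.ConnectedAvoiding F` unfolds to
`∀ x y, G.ReachAvoiding F x y`. -/
def ReachAvoiding (F : Set G.E) : G.V → G.V → Prop :=
  Relation.ReflTransGen (G.AdjAvoiding F)

variable (G) in
/-- Some cycle contains `e₁` but not `e₂`: the failure of one half of `e₁ ∼ e₂`. -/
def HasCycleAvoiding (e₁ e₂ : G.E) : Prop :=
  ∃ C : Finset G.E, G.IsCycle C ∧ e₁ ∈ C ∧ e₂ ∉ C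

lemma Joins.symm (h : G.Joins e x y) : G.Joins e y x :=
  Or.symm h

lemma Joins.eq_and_eq_or_eq_and_eq {x' y' : G.V} (h : G.Joins e x y) (h' : G.Joins e x' y') :
    (x = x' ∧ y = y') ∨ (x = y' ∧ y = x') := by
  unfold Joins at h h'
  grind

lemma ReachAvoiding.symm (h : G.ReachAvoiding F x y) : G.ReachAvoiding F y x :=
  have : Std.Symm (G.AdjAvoiding F) := ⟨fun _ _ ⟨e, he, hxy⟩ => ⟨e, he, hxy.symm⟩⟩
  Relation.ReflTransGen.stdSymm.symm _ _ h

lemma Joins.reachAvoiding_iff (h : G.Joins e x y) :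
    G.ReachAvoiding F x y ↔ G.ReachAvoiding F (G.s e) (G.t e) := by
  obtain ⟨rfl, rfl⟩ | ⟨rfl, rfl⟩ := h
  · rfl
  · exact ⟨.symm, .symm⟩

lemma ReachAvoiding.of_forall_ends
    (hends : ∀ e ∈ F', e ∉ F → G.ReachAvoiding F' (G.s e) (G.t e))
    (h : G.ReachAvoiding F x y) : G.ReachAvoiding F' x y := by
  refine Relation.reflTransGen_closed ?_ _ _ h
  rintro a b ⟨e, heF, hab⟩
  by_cases heF' : e ∈ F'
  · exact hab.reachAvoiding_iff.mpr (hends e heF' heF)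
  · exact .single ⟨e, heF', hab⟩

lemma Connected.connectedAvoiding_iff (hc : G.Connected) :
    G.ConnectedAvoiding F ↔ ∀ e ∈ F, G.ReachAvoiding F (G.s e) (G.t e) := by
  refine ⟨fun h e _ => h (G.s e) (G.t e), fun h a b => ?_⟩
  have hab : G.ReachAvoiding ∅ a b :=
    Relation.ReflTransGen.mono (fun _ _ ⟨e, he⟩ => ⟨e, Set.notMem_empty e, he⟩) _ _ (hc.2 a b)
  exact hab.of_forall_ends fun e he _ => h e he

lemma IsCycle.reachAvoiding {C : Finset G.E} (hC : G.IsCycle C) (he : e ∈ C)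
    (hF : ∀ f ∈ C, f ∈ F → f = e) : G.ReachAvoiding F (G.s e) (G.t e) := by
  obtain ⟨n, -, c, v, hinj, hjoins, hclosed, -, rfl⟩ := hC
  obtain ⟨i, -, rfl⟩ := Finset.mem_image.mp he
  have step (k : Fin n) (hk : k ≠ i) : G.AdjAvoiding F (v k.castSucc) (v k.succ) :=
    ⟨c k, fun h => hk (hinj (hF _ (by simp) h)), hjoins k⟩
  have before : G.ReachAvoiding F (v 0) (v i.castSucc) :=
    reflTransGen_of_castSucc_succ (Fin.zero_le _) fun k _ hk =>
      step k (Fin.succ_le_castSucc_iff.mp hk).ne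
  have after : G.ReachAvoiding F (v i.succ) (v (Fin.last n)) :=
    reflTransGen_of_castSucc_succ (Fin.le_last _) fun k hk _ =>
      step k (Fin.succ_le_castSucc_iff.mp hk).ne'
  rw [← hclosed] at after
  have around : G.ReachAvoiding F (v i.succ) (v i.castSucc) := after.trans before
  exact (Joins.reachAvoiding_iff (hjoins i)).mp around.symm

section Path

variable {n : ℕ} {c : Fin n → G.E} {v : Fin (n + 1) → G.V}

lemma injective_edges_of_injective_vertices (hv : Function.Injective v)
    (hjoins : ∀ i, G.Joins (c i) (v i.castSucc) (v i.succ)) : Function.Injective c := by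
  intro i j hij
  obtain ⟨h, -⟩ | ⟨h, h'⟩ := (hjoins i).eq_and_eq_or_eq_and_eq (hij ▸ hjoins j)
  · exact Fin.castSucc_injective n (hv h)
  · have hi : (i : ℕ) = j + 1 := congrArg Fin.val (hv h)
    have hj : (i : ℕ) + 1 = j := congrArg Fin.val (hv h')
    omega

lemma isCycle_insert_image_of_injective (hv : Function.Injective v)
    (hjoins : ∀ i, G.Joins (c i) (v i.castSucc) (v i.succ)) (he : e ∉ Set.range c)
    (hclose : G.Joins e (v (Fin.last n)) (v 0)) :
    G.IsCycle (insert e (Finset.univ.image c)) := by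
  have hc := injective_edges_of_injective_vertices hv hjoins
  refine ⟨n + 1, n.succ_pos, Fin.snoc c e, Fin.snoc v (v 0),
    Fin.snoc_injective_iff.mpr ⟨hc, he⟩, ?_, ?_, ?_, ?_⟩
  · refine Fin.lastCases ?_ fun i => ?_
    · simpa [Joins] using hclose
    · simpa only [Joins, Fin.succ_castSucc, Fin.snoc_castSucc] using hjoins i
  · rw [Fin.snoc_last, Fin.snoc_apply_zero]
  · intro i j hij
    cases i using Fin.lastCases <;> cases j using Fin.lastCases <;>
      simp_all [hv.eq_iff, eq_comm]
  · ext f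
    simp [Fin.exists_fin_succ', eq_comm, or_comm]

end Path

lemma ReachAvoiding.exists_isCycle (he : e ∈ F) (h : G.ReachAvoiding F (G.s e) (G.t e)) :
    ∃ C : Finset G.E, G.IsCycle C ∧ e ∈ C ∧ ∀ f ∈ C, f ∈ F → f = e := by
  obtain ⟨n, v, hv, hfirst, hlast, hstep⟩ := exists_injective_chain_of_reflTransGen h
  choose c hcF hjoins using hstep
  have hec : e ∉ Set.range c := by
    rintro ⟨i, rfl⟩
    exact hcF i he
  have hclose : G.Joins e (v (Fin.last n)) (v 0) := .inr ⟨hfirst.symm, hlast.symm⟩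
  refine ⟨_, isCycle_insert_image_of_injective hv hjoins hec hclose,
    Finset.mem_insert_self _ _, ?_⟩
  simpa using fun i hi => absurd hi (hcF i)

lemma reachAvoiding_pair_iff (hne : e₁ ≠ e₂) :
    G.ReachAvoiding {e₁, e₂} (G.s e₁) (G.t e₁) ↔ G.HasCycleAvoiding e₁ e₂ := by
  constructor
  · intro h
    obtain ⟨C, hC, h₁, hmeet⟩ := h.exists_isCycle (by simp)
    exact ⟨C, hC, h₁, fun h₂ => hne (hmeet e₂ h₂ (by simp)).symm⟩
  · rintro ⟨C, hC, h₁, h₂⟩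
    refine hC.reachAvoiding h₁ ?_
    rintro f hf (rfl | rfl)
    · rfl
    · exact absurd hf h₂

lemma Connected.connectedAvoiding_pair_iff (hc : G.Connected) (hne : e₁ ≠ e₂) :
    G.ConnectedAvoiding {e₁, e₂} ↔ G.HasCycleAvoiding e₁ e₂ ∧ G.HasCycleAvoiding e₂ e₁ := by
  rw [hc.connectedAvoiding_iff, ← reachAvoiding_pair_iff hne, ← reachAvoiding_pair_iff hne.symm,
    Set.pair_comm e₂ e₁]
  simp

lemma not_sim_iff : ¬ G.Sim e₁ e₂ ↔ G.HasCycleAvoiding e₁ e₂ ∨ G.HasCycleAvoiding e₂ e₁ := by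
  unfold Sim HasCycleAvoiding
  grind

lemma not_isBridge_iff : ¬ G.IsBridge e ↔ ∃ C : Finset G.E, G.IsCycle C ∧ e ∈ C := by
  simp [IsBridge]

lemma HasCycleAvoiding.ne (h : G.HasCycleAvoiding e₁ e₂) : e₁ ≠ e₂ := by
  rintro rfl
  obtain ⟨C, -, h₁, h₂⟩ := h
  exact h₂ h₁

lemma HasCycleAvoiding.not_isBridge (h : G.HasCycleAvoiding e₁ e₂) : ¬ G.IsBridge e₁ :=
  let ⟨C, hC, h₁, _⟩ := h
  not_isBridge_iff.mpr ⟨C, hC, h₁⟩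

lemma HasCycleAvoiding.symm (h : G.HasCycleAvoiding e₁ e₂) (hb : ¬ G.IsBridge e₂) :
    G.HasCycleAvoiding e₂ e₁ := by
  obtain ⟨D, hD, h₂⟩ := not_isBridge_iff.mp hb
  have reach₁ : G.ReachAvoiding {e₂, e₁} (G.s e₁) (G.t e₁) :=
    Set.pair_comm e₁ e₂ ▸ (reachAvoiding_pair_iff h.ne).mpr h
  have reach₂ : G.ReachAvoiding {e₂} (G.s e₂) (G.t e₂) := hD.reachAvoiding h₂ fun _ _ => id
  refine (reachAvoiding_pair_iff h.ne.symm).mp (reach₂.of_forall_ends ?_)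
  rintro f (rfl | rfl) hf
  · exact absurd rfl hf
  · exact reach₁

lemma hasCycleAvoiding_comm (hb : G.IsBridge e₁ ↔ G.IsBridge e₂) :
    G.HasCycleAvoiding e₁ e₂ ↔ G.HasCycleAvoiding e₂ e₁ :=
  ⟨fun h => h.symm (hb.not.mp h.not_isBridge), fun h => h.symm (hb.not.mpr h.not_isBridge)⟩

end Multigraph

theorem separating_pair_iff_sim_general (G : Multigraph) (hc : G.Connected) (e₁ e₂ : G.E)
    (hb : G.IsBridge e₁ ↔ G.IsBridge e₂) (hne : e₁ ≠ e₂) :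
    ¬ G.ConnectedAvoiding {e₁, e₂} ↔ G.Sim e₁ e₂ := by
  rw [hc.connectedAvoiding_pair_iff hne, not_iff_comm, Multigraph.not_sim_iff,
    Multigraph.hasCycleAvoiding_comm hb, or_self, and_self]

/-- In a connected bridgeless multigraph, for distinct edges `e₁, e₂`, the
graph `G - {e₁,e₂}` is disconnected if and only if every cycle containing `e₁` contains
`e₂` and conversely (i.e. `(e₁,e₂)` is a separating pair exactly when `e₁ ∼ e₂`). -/
theorem separating_pair_iff_sim (G : Multigraph) (hc : G.Connected) (hb : G.Bridgeless)
    (e₁ e₂ : G.E) (hne : e₁ ≠ e₂) :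
    ¬ G.ConnectedAvoiding {e₁, e₂} ↔ G.Sim e₁ e₂ :=
  separating_pair_iff_sim_general G hc e₁ e₂ (iff_of_false (hb e₁) (hb e₂)) hne
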